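/- arXiv:2502.01950 — 2 statements merged into one kernel-verified Lean document; each statement's English description precedes it below -/
import Mathlib

section
/- Let G be a nontrivial finite solvable group. Then the Fitting height of G is at most |cod(G)| − 1, where cod(G) is the set of all codegrees of irreducible characters of G. -/
open CategoryTheory

/-- The kernel of (the character of) a finite-dimensional complex representation. -/
noncomputable def charKer {G : Type} [Group G] (V : FDRep ℂ G) : Subgroup G :=
  MonoidHom.ker (Representation.asGroupHom V.ρ)

/-- The codegree of a character: `|G : ker χ| / χ(1)`. -/
noncomputable def codeg {G : Type} [Group G] (V : FDRep ℂ G) : ℕ :=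
  (charKer V).index / Module.finrank ℂ V

/-- The set of codegrees of irreducible characters of `G`. -/
def codSet (G : Type) [Group G] : Set ℕ :=
  {n | ∃ V : FDRep ℂ G, Simple V ∧ codeg V = n}

/-- Inner product of class functions on a finite group. -/
noncomputable def innerChar (G : Type) [Group G] (f g : G → ℂ) : ℂ :=
  (∑ᶠ x : G, f x * starRingEnd ℂ (g x)) / Nat.card G

open scoped Classical in
/-- The induced character `θ^G` of a character `θ` of a subgroup `H ≤ G`. -/
noncomputable def indChar {G : Type} [Group G] (H : Subgroup G) (θ : FDRep ℂ ↥H) : G → ℂ :=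
  fun g => (∑ᶠ x : G, if h : x * g * x⁻¹ ∈ H then θ.character ⟨x * g * x⁻¹, h⟩ else 0) /
    Nat.card ↥H

/-- `M/N` is nilpotent: some term of the lower central series of `M` (relative to `M`)
lands in `N`. -/
def nilpotentFactor {G : Type} [Group G] (N M : Subgroup G) : Prop :=
  ∃ m : ℕ, (fun K => ⁅K, M⁆)^[m] M ≤ N

/-- The Fitting height: the length of the shortest normal series with nilpotent factors. -/
noncomputable def fittingHeight (G : Type) [Group G] : ℕ :=
  sInf {n | ∃ c : Fin (n + 1) → Subgroup G, c 0 = ⊥ ∧ c (Fin.last n) = ⊤ ∧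
    (∀ i, (c i).Normal) ∧ (∀ i : Fin n, c i.castSucc ≤ c i.succ) ∧
    ∀ i : Fin n, nilpotentFactor (c i.castSucc) (c i.succ)}

/-!
Write `h(N)` for the Fitting height of `G ⧸ N` and `c(N)` for the number of codegrees of `G ⧸ N`;
if `N ≤ K` then `c(K) ≤ c(N)`. Descending through the normal subgroups `N` of `G`, one shows
`h(N) < c(N)`. Let `M / N` be a minimal normal subgroup of `G ⧸ N`; it is abelian.

* If some normal `K > N` does not contain `M`, then `M ⊓ K = N`, so `G ⧸ N` is a subdirect
  product of `G ⧸ M` and `G ⧸ K` and `h(N) ≤ max (h(M)) (h(K))`.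
* If every maximal subgroup over `N` contains `M`, then `M / N` lies in the Frattini subgroup of
  `G ⧸ N`, and the Frattini argument gives `h(N) ≤ h(M)`.
* Otherwise `M / N` is the unique minimal normal subgroup and `H M = G` for some maximal subgroup
  `H ≥ N`. Since `M` moves a point of `G ⧸ H`, the permutation character has an irreducible
  constituent `χ` on which `M` acts nontrivially, and `ker χ = N` by uniqueness. As `χ` is not the
  only constituent, `χ(1) < |G : H| ≤ |M : N|`; as `M / N` is abelian, `χ(1) ≤ |G : M|`. Hence
  `(|G : M| + 1) χ(1) ≤ |G : N|`, so the codegree of `χ` exceeds `|G : M|`, which bounds all the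
  codegrees of `G ⧸ M`. Therefore `c(M) < c(N)`, while `h(N) ≤ h(M) + 1`.
-/

section NormalSubgroup

variable {G : Type*} [Group G]

theorem relIndex_eq_index_of_sup_eq_top {M H : Subgroup G} [M.Normal] [M.FiniteIndex]
    (h : M ⊔ H = ⊤) : H.relIndex M = H.index := by
  have hMH : M.relIndex H = M.index := by
    rw [← Subgroup.relIndex_sup_left, h, Subgroup.relIndex_top_right]
  have hindex : M.index * H.index = M.index * H.relIndex M := by
    rw [← hMH, ← Subgroup.inf_relIndex_right M H, Subgroup.relIndex_mul_index inf_le_right,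
      ← Subgroup.relIndex_mul_index (inf_le_left : M ⊓ H ≤ M), Subgroup.inf_relIndex_left,
      ← hMH, mul_comm, Subgroup.inf_relIndex_right]
  exact (Nat.eq_of_mul_eq_mul_left (Nat.pos_of_ne_zero Subgroup.FiniteIndex.index_ne_zero)
    hindex).symm

theorem exists_minimal_normal_commutator_le [Finite G] [Group.IsSolvable G] {N : Subgroup G}
    [N.Normal] (hN : N ≠ ⊤) :
    ∃ M : Subgroup G, Minimal (fun K : Subgroup G => K.Normal ∧ N < K) M ∧ ⁅M, M⁆ ≤ N := by
  obtain ⟨M, hM⟩ := (Set.toFinite {K : Subgroup G | K.Normal ∧ N < K}).exists_minimal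
    ⟨⊤, inferInstance, hN.lt_top⟩
  have := hM.prop.1
  have hNM : N < M := hM.prop.2
  refine ⟨M, hM, by_contra fun hcomm => ?_⟩
  have hM_le : M ≤ N ⊔ ⁅M, M⁆ :=
    hM.le_of_le ⟨inferInstance, left_lt_sup.mpr hcomm⟩
      (sup_le hNM.le (Subgroup.commutator_le_left M M))
  set π := QuotientGroup.mk' N
  have hbot : M.map π ≠ ⊥ := fun h => hNM.not_ge <| by
    rwa [Subgroup.map_eq_bot_iff, QuotientGroup.ker_mk'] at h
  refine (Group.IsSolvable.commutator_lt_of_ne_bot hbot).not_ge ?_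
  calc M.map π ≤ (N ⊔ ⁅M, M⁆).map π := Subgroup.map_mono hM_le
    _ = ⁅M.map π, M.map π⁆ := by
      rw [Subgroup.map_sup, QuotientGroup.map_mk'_self, bot_sup_eq, Subgroup.map_commutator]

theorem smul_eq_self_of_mem_of_le {N H : Subgroup G} [N.Normal] (hNH : N ≤ H) {n : G} (hn : n ∈ N)
    (x : G ⧸ H) : n • x = x := by
  obtain ⟨g, rfl⟩ := QuotientGroup.mk_surjective x
  rw [MulAction.Quotient.smul_coe, eq_comm, QuotientGroup.eq, smul_eq_mul, ← mul_assoc]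
  exact hNH (by simpa only [inv_inv] using ‹N.Normal›.conj_mem n hn g⁻¹)

end NormalSubgroup

section Frattini

variable {G : Type*} [Group G]

theorem normalizer_sup_eq_top_of_not_dvd_relIndex {p : ℕ} [Fact p.Prime] {P L : Subgroup G}
    [L.Normal] [Finite L] (hP : IsPGroup p P) (hPL : P ≤ L) (hp : ¬ p ∣ P.relIndex L) :
    Subgroup.normalizer (P : Set G) ⊔ L = ⊤ := by
  let Q : Sylow p L := (hP.comap_subtype (K := L)).toSylow hp
  have hQ : (Q : Subgroup L).map L.subtype = P := Subgroup.map_subgroupOf_eq_of_le hPL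
  rw [← hQ]
  exact Sylow.normalizer_sup_eq_top Q

theorem normal_map_subtype_sup_of_isNilpotent_map {p : ℕ} [Fact p.Prime] {M K : Subgroup G}
    [M.Normal] [K.Normal] [Finite K] (hK : Group.IsNilpotent (K.map (QuotientGroup.mk' M)))
    (P : Sylow p K) : ((P : Subgroup K).map K.subtype ⊔ M).Normal := by
  set π := QuotientGroup.mk' M
  have : Finite (K.map π) := Finite.of_surjective _ (π.subgroupMap_surjective K)
  let P' : Sylow p (K.map π) := P.mapSurjective (π.subgroupMap_surjective K)
  have hP' : (P' : Subgroup (K.map π)).Normal :=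
    (Group.isNilpotent_of_finite_tfae.out 0 3 rfl rfl).mp hK p ‹_› P'
  have := P'.characteristic_of_normal hP'
  have : (K.map π).Normal := ‹K.Normal›.map π (QuotientGroup.mk'_surjective M)
  have hmap : (P' : Subgroup (K.map π)).map (K.map π).subtype =
      ((P : Subgroup K).map K.subtype).map π := by
    simp only [P', Sylow.coe_mapSurjective, Subgroup.map_map]
    rfl
  have hsup : (P : Subgroup K).map K.subtype ⊔ M =
      ((P' : Subgroup (K.map π)).map (K.map π).subtype).comap π := by
    rw [hmap, Subgroup.comap_map_eq, QuotientGroup.ker_mk']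
  rw [hsup]
  exact Subgroup.Normal.comap ConjAct.normal_of_characteristic_of_normal π

theorem isNilpotent_of_le_frattini [Finite G] {M K : Subgroup G} [M.Normal] [K.Normal]
    (hMK : M ≤ K) (hM : M ≤ frattini G)
    (hK : Group.IsNilpotent (K.map (QuotientGroup.mk' M))) : Group.IsNilpotent K := by
  refine (Group.isNilpotent_of_finite_tfae.out 0 3 rfl rfl).mpr fun p hp P => ?_
  let P₀ : Subgroup G := (P : Subgroup K).map K.subtype
  have hP₀K : P₀ ≤ K := Subgroup.map_subtype_le _
  have : (P₀ ⊔ M).Normal := normal_map_subtype_sup_of_isNilpotent_map hK P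
  have hindex : ¬ p ∣ P₀.relIndex (P₀ ⊔ M) := by
    have hdvd : P₀.relIndex (P₀ ⊔ M) ∣ P₀.relIndex K :=
      Dvd.intro _ (Subgroup.relIndex_mul_relIndex _ _ _ le_sup_left (sup_le hP₀K hMK))
    have hPK : P₀.subgroupOf K = P :=
      Subgroup.comap_map_eq_self_of_injective K.subtype_injective _
    rw [Subgroup.relIndex.eq_1 P₀ K, hPK] at hdvd
    exact fun h => P.not_dvd_index (h.trans hdvd)
  have hgen : Subgroup.normalizer (P₀ : Set G) ⊔ frattini G = ⊤ := by
    rw [eq_top_iff,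
      ← normalizer_sup_eq_top_of_not_dvd_relIndex (P.isPGroup'.map K.subtype) le_sup_left hindex]
    exact sup_le le_sup_left
      (sup_le (Subgroup.le_normalizer.trans le_sup_left) (hM.trans le_sup_right))
  have hnormal : P₀.Normal := Subgroup.normalizer_eq_top_iff.mp (frattini_nongenerating hgen)
  exact hnormal.of_map_subtype

theorem map_mk'_le_frattini {N M : Subgroup G} [N.Normal]
    (hM : ∀ H : Subgroup G, IsCoatom H → N ≤ H → M ≤ H) :
    M.map (QuotientGroup.mk' N) ≤ frattini (G ⧸ N) := by
  simp only [frattini, Order.radical, le_iInf_iff]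
  intro H hH
  rw [Subgroup.map_le_iff_le_comap]
  exact hM _ (Subgroup.isCoatom_comap_of_surjective (QuotientGroup.mk'_surjective N) hH)
    (QuotientGroup.le_comap_mk' N H)

end Frattini

section NilpotentSeries

variable {G : Type} [Group G]

theorem nilpotentFactor_iff_lowerCentralSeries_le {N M : Subgroup G} :
    nilpotentFactor N M ↔ ∃ m, M.lowerCentralSeries m ≤ N := by
  have h (m : ℕ) : (fun K => ⁅K, M⁆)^[m] M = M.lowerCentralSeries m := by
    induction m with
    | zero => rfl
    | succ m ih => rw [Function.iterate_succ_apply', ih, Subgroup.lowerCentralSeries_succ]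
  simp only [nilpotentFactor, h]

theorem nilpotentFactor_iff_isNilpotent_map {N M : Subgroup G} [N.Normal] :
    nilpotentFactor N M ↔ Group.IsNilpotent (M.map (QuotientGroup.mk' N)) := by
  rw [nilpotentFactor_iff_lowerCentralSeries_le, Subgroup.isNilpotent_iff_lowerCentralSeries]
  simp only [← Subgroup.map_lowerCentralSeries, Subgroup.map_eq_bot_iff, QuotientGroup.ker_mk']

theorem nilpotentFactor.inf {N M N' M' : Subgroup G} (h : nilpotentFactor N M)
    (h' : nilpotentFactor N' M') : nilpotentFactor (N ⊓ N') (M ⊓ M') := by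
  rw [nilpotentFactor_iff_lowerCentralSeries_le] at h h' ⊢
  obtain ⟨a, ha⟩ := h
  obtain ⟨b, hb⟩ := h'
  refine ⟨max a b, le_inf ?_ ?_⟩
  · exact (Subgroup.lowerCentralSeries_antitone _ (le_max_left a b)).trans
      ((Subgroup.lowerCentralSeries_mono a inf_le_left).trans ha)
  · exact (Subgroup.lowerCentralSeries_antitone _ (le_max_right a b)).trans
      ((Subgroup.lowerCentralSeries_mono b inf_le_right).trans hb)

theorem nilpotentFactor.of_forall_isCoatom [Finite G] {N M K : Subgroup G} [N.Normal] [M.Normal]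
    [K.Normal] (h : nilpotentFactor M K) (hMK : M ≤ K)
    (hM : ∀ H : Subgroup G, IsCoatom H → N ≤ H → M ≤ H) : nilpotentFactor N K := by
  have hπ := QuotientGroup.mk'_surjective N
  have : (M.map (QuotientGroup.mk' N)).Normal := ‹M.Normal›.map _ hπ
  have : (K.map (QuotientGroup.mk' N)).Normal := ‹K.Normal›.map _ hπ
  rw [nilpotentFactor_iff_isNilpotent_map]
  refine isNilpotent_of_le_frattini (Subgroup.map_mono hMK) (map_mk'_le_frattini hM) ?_
  rw [← nilpotentFactor_iff_isNilpotent_map]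
  rw [nilpotentFactor_iff_lowerCentralSeries_le] at h ⊢
  exact h.imp fun m hm => by
    rw [← Subgroup.map_lowerCentralSeries]
    exact Subgroup.map_mono hm

/-- `HasNilpotentSeries N n` says that there is a chain of `n` inclusions of normal subgroups from
`N` up to the whole group with nilpotent factors. For `N` normal, this means that the Fitting
height of `G ⧸ N` is at most `n`. -/
inductive HasNilpotentSeries : Subgroup G → ℕ → Prop
  | top : HasNilpotentSeries ⊤ 0
  | cons {N M : Subgroup G} {n : ℕ} (hN : N.Normal) (hNM : N ≤ M) (hfactor : nilpotentFactor N M)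
      (hM : HasNilpotentSeries M n) : HasNilpotentSeries N (n + 1)

theorem HasNilpotentSeries.normal {N : Subgroup G} {n : ℕ} (h : HasNilpotentSeries N n) :
    N.Normal := by
  cases h with
  | top => infer_instance
  | cons hN => exact hN

theorem HasNilpotentSeries.inf {N M : Subgroup G} {n m : ℕ} (hN : HasNilpotentSeries N n)
    (hM : HasNilpotentSeries M m) : HasNilpotentSeries (N ⊓ M) (max n m) := by
  induction hN generalizing M m with
  | top => simpa only [top_inf_eq, Nat.zero_max] using hM
  | cons hN hNN' hfactor hN' ih =>
    cases hM with
    | top => simpa only [inf_top_eq, Nat.max_zero] using hN'.cons hN hNN' hfactor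
    | cons hM hMM' hfactor' hM' =>
      rw [Nat.add_max_add_right]
      exact (ih hM').cons inferInstance (inf_le_inf hNN' hMM') (hfactor.inf hfactor')

theorem HasNilpotentSeries.of_forall_isCoatom [Finite G] {N M : Subgroup G} [N.Normal] {n : ℕ}
    (h : HasNilpotentSeries M n) (hN : N ≠ ⊤) (hNM : N ≤ M)
    (hM : ∀ H : Subgroup G, IsCoatom H → N ≤ H → M ≤ H) : HasNilpotentSeries N n := by
  cases h with
  | top =>
    obtain ⟨H, hH, hNH⟩ := (eq_top_or_exists_le_coatom N).resolve_left hN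
    exact absurd (top_le_iff.mp (hM H hH hNH)) hH.1
  | cons hMnormal hMK hfactor hK =>
    have := hK.normal
    exact hK.cons ‹_› (hNM.trans hMK) (hfactor.of_forall_isCoatom hMK hM)

theorem HasNilpotentSeries.exists_fin_series {N : Subgroup G} {n : ℕ}
    (h : HasNilpotentSeries N n) :
    ∃ c : Fin (n + 1) → Subgroup G, c 0 = N ∧ c (Fin.last n) = ⊤ ∧
      (∀ i, (c i).Normal) ∧ (∀ i : Fin n, c i.castSucc ≤ c i.succ) ∧
      ∀ i : Fin n, nilpotentFactor (c i.castSucc) (c i.succ) := by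
  induction h with
  | top => exact ⟨fun _ => ⊤, rfl, rfl, fun _ => inferInstance, fun _ => le_rfl, fun i => i.elim0⟩
  | @cons N _ _ hN hNM hfactor _ ih =>
    obtain ⟨c, rfl, hlast, hnormal, hle, hnil⟩ := ih
    refine ⟨Fin.cons N c, rfl, hlast, Fin.cases hN hnormal, Fin.cases hNM fun i => ?_,
      Fin.cases hfactor fun i => ?_⟩
    · simpa only [← Fin.succ_castSucc, Fin.cons_succ] using hle i
    · simpa only [← Fin.succ_castSucc, Fin.cons_succ] using hnil i

theorem fittingHeight_le_of_hasNilpotentSeries {n : ℕ}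
    (h : HasNilpotentSeries (⊥ : Subgroup G) n) : fittingHeight G ≤ n :=
  Nat.sInf_le h.exists_fin_series

end NilpotentSeries

section Representation

open scoped commutatorElement MonoidAlgebra

variable {k G V : Type*} [Field k] [AddCommGroup V] [Module k V]

theorem toRepresentation_isIrreducible_of_isAtom [Monoid G] {ρ : Representation k G V}
    {σ : Subrepresentation ρ} (hσ : IsAtom σ) : σ.toRepresentation.IsIrreducible := by
  let map (ν : Subrepresentation σ.toRepresentation) : Subrepresentation ρ :=
    ⟨ν.toSubmodule.map σ.toSubmodule.subtype, by
      rintro g _ ⟨v, hv, rfl⟩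
      exact ⟨_, ν.apply_mem_toSubmodule g hv, rfl⟩⟩
  have map_le (ν) : map ν ≤ σ := Submodule.map_subtype_le _ ν.toSubmodule
  have eq_of_map_eq {ν ν'} (h : map ν = map ν') : ν = ν' :=
    Subrepresentation.toSubmodule_injective <|
      Submodule.map_injective_of_injective σ.toSubmodule.subtype_injective
        congr($h |>.toSubmodule)
  have map_bot : map ⊥ = ⊥ := Subrepresentation.toSubmodule_injective (Submodule.map_bot _)
  have map_top : map ⊤ = σ :=
    Subrepresentation.toSubmodule_injective (Submodule.map_subtype_top _)
  exact
    { exists_pair_ne := ⟨⊥, ⊤, fun h => hσ.1 <| by rw [← map_top, ← h, map_bot]⟩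
      eq_bot_or_eq_top ν := (hσ.le_iff.mp (map_le ν)).imp
        (fun h => eq_of_map_eq (h.trans map_bot.symm))
        (fun h => eq_of_map_eq (h.trans map_top.symm)) }

theorem nontrivial_of_isIrreducible [Monoid G] (ρ : Representation k G V) [ρ.IsIrreducible] :
    Nontrivial V :=
  (Submodule.nontrivial_iff k).mp
    (Subrepresentation.toSubmodule_injective (ρ := ρ)).nontrivial

theorem isAtomic_subrepresentation [Monoid G] [FiniteDimensional k V]
    (ρ : Representation k G V) : IsAtomic (Subrepresentation ρ) :=
  have : StrictMono (Subrepresentation.toSubmodule (ρ := ρ)) := fun _ _ h => h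
  have := this.wellFoundedLT
  isAtomic_of_orderBot_wellFounded_lt wellFounded_lt

theorem exists_common_eigenvector_of_commute [Monoid G] [IsAlgClosed k] [FiniteDimensional k V]
    [Nontrivial V] (ρ : Representation k G V) (hρ : ∀ g h, Commute (ρ g) (ρ h)) :
    ∃ v ≠ 0, ∀ g, ∃ c : k, ρ g v = c • v := by
  have := isAtomic_subrepresentation ρ
  have hbot : (⊤ : Subrepresentation ρ) ≠ ⊥ := fun h =>
    top_ne_bot (α := Submodule k V) congr($h |>.toSubmodule)
  obtain ⟨σ, hσ, -⟩ := (eq_bot_or_exists_atom_le (⊤ : Subrepresentation ρ)).resolve_left hbot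
  have := toRepresentation_isIrreducible_of_isAtom hσ
  obtain ⟨v, hvσ, hv⟩ := Submodule.exists_mem_ne_zero_of_ne_bot
    fun h => hσ.1 (Subrepresentation.toSubmodule_injective h)
  refine ⟨v, hv, fun g => ?_⟩
  let f : Representation.IntertwiningMap σ.toRepresentation σ.toRepresentation :=
    { σ.toRepresentation g with
      isIntertwining' h := LinearMap.ext fun w => Subtype.ext congr($(hρ g h) w) }
  obtain ⟨c, hc⟩ :=
    Representation.IsIrreducible.algebraMap_intertwiningMap_bijective_of_isAlgClosed.2 f
  exact ⟨c, congr(($hc ⟨v, hvσ⟩ : V)).symm⟩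

variable [Group G]

theorem commute_of_map_commutatorElement_eq_one {ρ : Representation k G V} {a b : G}
    (h : ρ ⁅a, b⁆ = 1) : Commute (ρ a) (ρ b) := by
  have hab : a * b = ⁅a, b⁆ * (b * a) := by group
  rw [commute_iff_eq, ← map_mul, hab, map_mul, h, one_mul, map_mul]

theorem span_range_out_apply_eq_top {ρ : Representation k G V} [ρ.IsIrreducible] {M : Subgroup G}
    {v : V} (hv : v ≠ 0) (hM : ∀ m ∈ M, ∃ c : k, ρ m v = c • v) :
    Submodule.span k (Set.range fun q : G ⧸ M => ρ q.out v) = ⊤ := by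
  set S := Submodule.span k (Set.range fun q : G ⧸ M => ρ q.out v)
  have apply_mem (g : G) : ρ g v ∈ S := by
    obtain ⟨m, hm⟩ := QuotientGroup.mk_out_eq_mul M g
    obtain ⟨c, hc⟩ := hM m⁻¹ (M.inv_mem m.2)
    have hg : ρ g v = c • ρ (g : G ⧸ M).out v := by
      rw [← map_smul, ← hc, ← Module.End.mul_apply, ← map_mul, hm, mul_inv_cancel_right]
    exact hg ▸ S.smul_mem c (Submodule.subset_span ⟨_, rfl⟩)
  have invariant (g : G) : S ≤ S.comap (ρ g) := by
    rw [Submodule.span_le]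
    rintro _ ⟨q, rfl⟩
    simpa only [Submodule.comap_coe, Set.mem_preimage, SetLike.mem_coe, map_mul,
      Module.End.mul_apply] using apply_mem (g * q.out)
  have hvS : v ∈ S := by simpa only [map_one, Module.End.one_apply] using apply_mem 1
  let σ : Subrepresentation ρ := ⟨S, invariant⟩
  have hσ : σ ≠ ⊥ := fun h => hv <| (Submodule.mem_bot k).mp <| by
    rwa [← show S = ⊥ from congr($h |>.toSubmodule)]
  exact congr($((eq_bot_or_eq_top σ).resolve_left hσ) |>.toSubmodule)

theorem finrank_le_index_of_commute [IsAlgClosed k] [FiniteDimensional k V]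
    (ρ : Representation k G V) [ρ.IsIrreducible] (M : Subgroup G) [M.FiniteIndex]
    (hM : ∀ a ∈ M, ∀ b ∈ M, Commute (ρ a) (ρ b)) : Module.finrank k V ≤ M.index := by
  have := nontrivial_of_isIrreducible ρ
  obtain ⟨v, hv, hMv⟩ := exists_common_eigenvector_of_commute (ρ.comp M.subtype)
    fun a b => hM a a.2 b b.2
  have := Fintype.ofFinite (G ⧸ M)
  calc Module.finrank k V
      = (Set.range fun q : G ⧸ M => ρ q.out v).finrank k := by
        rw [Set.finrank, span_range_out_apply_eq_top hv fun m hm => hMv ⟨m, hm⟩, finrank_top]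
    _ ≤ Fintype.card (G ⧸ M) := finrank_range_le_card _
    _ = M.index := by rw [Subgroup.index, Nat.card_eq_fintype_card]

/-- The fixed points of a normal subgroup `N`, as a subrepresentation. A nonzero subrepresentation
disjoint from it is one on which no nonzero vector is fixed by `N`, so that its kernel does not
contain `N`. -/
noncomputable def fixedSubrepresentation (ρ : Representation k G V) (N : Subgroup G) [N.Normal] :
    Subrepresentation ρ :=
  ⟨Representation.invariants (ρ.comp N.subtype), fun g => ρ.le_comap_invariants N g⟩

theorem mem_fixedSubrepresentation {ρ : Representation k G V} {N : Subgroup G} [N.Normal] {v : V} :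
    v ∈ fixedSubrepresentation ρ N ↔ ∀ n ∈ N, ρ n v = v :=
  Subtype.forall

theorem exists_isAtom_disjoint_fixedSubrepresentation [FiniteDimensional k V]
    (ρ : Representation k G V) [ρ.IsSemisimpleRepresentation] {N : Subgroup G} [N.Normal]
    (h : fixedSubrepresentation ρ N ≠ ⊤) :
    ∃ σ : Subrepresentation ρ, IsAtom σ ∧ Disjoint σ (fixedSubrepresentation ρ N) := by
  have := isAtomic_subrepresentation ρ
  obtain ⟨τ, hτ⟩ := exists_isCompl (fixedSubrepresentation ρ N)
  have hbot : τ ≠ ⊥ := by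
    rintro rfl
    exact h (by simpa using hτ.sup_eq_top)
  obtain ⟨σ, hσ, hστ⟩ := (eq_bot_or_exists_atom_le τ).resolve_left hbot
  exact ⟨σ, hσ, hτ.symm.disjoint.mono_left hστ⟩

theorem ofMulAction_eq_one {X : Type*} [MulAction G X] {g : G} (h : ∀ x : X, g • x = x) :
    Representation.ofMulAction k G X g = 1 := by
  refine MonoidAlgebra.lhom_ext' fun x => LinearMap.ext_ring ?_
  exact (Representation.ofMulAction_single g x 1).trans (by rw [h]; rfl)

theorem sum_single_mem_fixedSubrepresentation {X : Type*} [Fintype X] [MulAction G X]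
    (N : Subgroup G) [N.Normal] :
    ∑ x : X, MonoidAlgebra.single x (1 : k) ∈
      fixedSubrepresentation (Representation.ofMulAction k G X) N := by
  refine mem_fixedSubrepresentation.mpr fun n _ => ?_
  simp only [map_sum, Representation.ofMulAction_single]
  exact Fintype.sum_equiv (MulAction.toPerm n) _ _ fun _ => rfl

theorem exists_isAtom_disjoint_fixedSubrepresentation_ofMulAction {X : Type*} [Finite G] [Finite X]
    [MulAction G X] [NeZero (Nat.card G : k)] {N : Subgroup G} [N.Normal] {n : G} {x : X}
    (hn : n ∈ N) (hnx : n • x ≠ x) :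
    ∃ σ : Subrepresentation (Representation.ofMulAction k G X), IsAtom σ ∧
      Disjoint σ (fixedSubrepresentation (Representation.ofMulAction k G X) N) ∧
      Module.finrank k σ.toSubmodule < Nat.card X := by
  have := Fintype.ofFinite X
  have : FiniteDimensional k k[X] := (MonoidAlgebra.coeffLinearEquiv k).symm.finiteDimensional
  set F := fixedSubrepresentation (Representation.ofMulAction k G X) N
  have hF_top : F ≠ ⊤ := fun h => hnx <| by
    have hx : MonoidAlgebra.single x (1 : k) ∈ F := h ▸ Submodule.mem_top
    have := mem_fixedSubrepresentation.mp hx n hn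
    rw [Representation.ofMulAction_single] at this
    exact MonoidAlgebra.single_left_injective one_ne_zero this
  have hF_bot : F ≠ ⊥ := fun h => by
    have hsum : ∑ y : X, MonoidAlgebra.single y (1 : k) = 0 :=
      (Submodule.mem_bot k).mp <| show _ ∈ (⊥ : Subrepresentation _) from
        h.le (sum_single_mem_fixedSubrepresentation N)
    have hcoeff := congr(($hsum).coeff x)
    classical
    simp [MonoidAlgebra.coeff_sum] at hcoeff
  obtain ⟨σ, hσ, hσF⟩ := exists_isAtom_disjoint_fixedSubrepresentation _ hF_top
  have hσ_top : σ ≠ ⊤ := by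
    rintro rfl
    exact hF_bot (top_disjoint.mp hσF)
  refine ⟨σ, hσ, hσF, ?_⟩
  calc Module.finrank k σ.toSubmodule
      < Module.finrank k k[X] := Submodule.finrank_lt fun h =>
        hσ_top (Subrepresentation.toSubmodule_injective h)
    _ = Nat.card X := by
        rw [(MonoidAlgebra.coeffLinearEquiv k).finrank_eq, Module.finrank_finsupp_self,
          Nat.card_eq_fintype_card]

end Representation

section Codegree

open scoped MonoidAlgebra

variable {G : Type} [Group G]

theorem simple_of_isIrreducible [Finite G] {V : Type} [AddCommGroup V] [Module ℂ V]
    [FiniteDimensional ℂ V] (ρ : Representation ℂ G V) [ρ.IsIrreducible] :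
    Simple (FDRep.of ρ) := by
  have : NeZero (Nat.card G : ℂ) := ⟨by exact_mod_cast Nat.card_pos.ne'⟩
  rw [FDRep.simple_iff_end_is_rank_one,
    ← (FDRep.forget₂HomLinearEquiv (FDRep.of ρ) (FDRep.of ρ)).finrank_eq,
    (Rep.homLinearEquiv _ _).finrank_eq]
  exact Representation.IsIrreducible.finrank_intertwiningMap_self (ρ := ρ)

theorem mem_charKer_of {V : Type} [AddCommGroup V] [Module ℂ V] [FiniteDimensional ℂ V]
    {ρ : Representation ℂ G V} {g : G} : g ∈ charKer (FDRep.of ρ) ↔ ρ g = 1 := by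
  rw [charKer, MonoidHom.mem_ker, Units.ext_iff]
  rfl

theorem not_le_charKer_of_disjoint_fixedSubrepresentation {V : Type} [AddCommGroup V] [Module ℂ V]
    [FiniteDimensional ℂ V] {ρ : Representation ℂ G V} {σ : Subrepresentation ρ} (hσ : σ ≠ ⊥)
    {M : Subgroup G} [M.Normal] (h : Disjoint σ (fixedSubrepresentation ρ M)) :
    ¬ M ≤ charKer (FDRep.of σ.toRepresentation) := by
  refine fun hM => hσ (h.eq_bot_of_le fun v hv => mem_fixedSubrepresentation.mpr fun m hm => ?_)
  exact congr(($(mem_charKer_of.mp (hM hm)) ⟨v, hv⟩ : V))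

theorem index_lt_codeg {V : FDRep ℂ G} {M : Subgroup G} (hVM : charKer V ≤ M)
    (hV : 0 < Module.finrank ℂ V) (hle : Module.finrank ℂ V ≤ M.index)
    (hlt : Module.finrank ℂ V < (charKer V).relIndex M) : M.index < codeg V := by
  rw [codeg, ← Nat.succ_le_iff, Nat.le_div_iff_mul_le hV]
  calc M.index.succ * Module.finrank ℂ V
      = M.index * Module.finrank ℂ V + Module.finrank ℂ V := Nat.succ_mul _ _
    _ ≤ M.index * Module.finrank ℂ V + M.index := Nat.add_le_add_left hle _
    _ = (Module.finrank ℂ V + 1) * M.index := by ring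
    _ ≤ (charKer V).relIndex M * M.index := Nat.mul_le_mul_right _ hlt
    _ = (charKer V).index := Subgroup.relIndex_mul_index hVM

/-- The codegrees of the irreducible characters of `G` with `N` in their kernel; for `N` normal,
these are the codegrees of `G ⧸ N`. -/
def codSetOver (N : Subgroup G) : Set ℕ :=
  {n | ∃ V : FDRep ℂ G, Simple V ∧ N ≤ charKer V ∧ codeg V = n}

theorem codSetOver_bot : codSetOver (⊥ : Subgroup G) = codSet G := by
  simp only [codSetOver, codSet, bot_le, true_and]

theorem codSetOver_antitone : Antitone (codSetOver (G := G)) :=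
  fun _ _ h _ ⟨V, hV, hle, hn⟩ => ⟨V, hV, h.trans hle, hn⟩

theorem codSetOver_nonempty [Finite G] (N : Subgroup G) : (codSetOver N).Nonempty := by
  have : (Representation.trivial ℂ G ℂ).IsIrreducible :=
    { exists_pair_ne := ⟨⊥, ⊤, fun h => bot_ne_top (α := Submodule ℂ ℂ) congr($h |>.toSubmodule)⟩
      eq_bot_or_eq_top σ := (eq_bot_or_eq_top σ.toSubmodule).imp
        (fun h => Subrepresentation.toSubmodule_injective h)
        (fun h => Subrepresentation.toSubmodule_injective h) }
  exact ⟨_, _, simple_of_isIrreducible (Representation.trivial ℂ G ℂ),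
    fun _ _ => mem_charKer_of.mpr rfl, rfl⟩

theorem le_index_of_mem_codSetOver {N : Subgroup G} [N.FiniteIndex] {n : ℕ}
    (hn : n ∈ codSetOver N) : n ≤ N.index := by
  obtain ⟨V, -, hle, rfl⟩ := hn
  exact (Nat.div_le_self _ _).trans (Subgroup.index_antitone hle)

theorem finite_codSetOver (N : Subgroup G) [N.FiniteIndex] : (codSetOver N).Finite :=
  (Set.finite_Iic N.index).subset fun _ => le_index_of_mem_codSetOver

theorem exists_isIrreducible_charKer_eq [Finite G] {N M H : Subgroup G} [N.Normal]
    (hM : IsLeast {K : Subgroup G | K.Normal ∧ N < K} M) (hH : IsCoatom H) (hNH : N ≤ H)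
    (hMH : ¬ M ≤ H) :
    ∃ (V : Type) (_ : AddCommGroup V) (_ : Module ℂ V) (_ : FiniteDimensional ℂ V)
      (ρ : Representation ℂ G V), ρ.IsIrreducible ∧ charKer (FDRep.of ρ) = N ∧
      Module.finrank ℂ V < N.relIndex M := by
  have : NeZero (Nat.card G : ℂ) := ⟨by exact_mod_cast Nat.card_pos.ne'⟩
  have : M.Normal := hM.1.1
  obtain ⟨m, hm, hmH⟩ := SetLike.not_le_iff_exists.mp hMH
  have hmove : m • ((1 : G) : G ⧸ H) ≠ (1 : G) := fun h => hmH <| by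
    rwa [MulAction.Quotient.smul_coe, smul_eq_mul, mul_one, eq_comm, QuotientGroup.eq, inv_one,
      one_mul] at h
  obtain ⟨σ, hσ, hσM, hσ_lt⟩ :=
    exists_isAtom_disjoint_fixedSubrepresentation_ofMulAction (k := ℂ) hm hmove
  have hfin : FiniteDimensional ℂ ℂ[G ⧸ H] :=
    (MonoidAlgebra.coeffLinearEquiv ℂ).symm.finiteDimensional
  have hN_le : N ≤ charKer (FDRep.of σ.toRepresentation) := fun n hn =>
    mem_charKer_of.mpr <| LinearMap.ext fun v =>
      Subtype.ext congr($(ofMulAction_eq_one (k := ℂ) (smul_eq_self_of_mem_of_le hNH hn)) v)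
  have hnormal : (charKer (FDRep.of σ.toRepresentation)).Normal := MonoidHom.normal_ker _
  have hker : charKer (FDRep.of σ.toRepresentation) = N :=
    (hN_le.eq_or_lt.resolve_right fun hlt =>
      not_le_charKer_of_disjoint_fixedSubrepresentation hσ.1 hσM (hM.2 ⟨hnormal, hlt⟩)).symm
  refine ⟨_, _, _, inferInstance, σ.toRepresentation, toRepresentation_isIrreducible_of_isAtom hσ,
    hker, ?_⟩
  calc Module.finrank ℂ σ.toSubmodule
      < H.index := hσ_lt
    _ = H.relIndex M := (relIndex_eq_index_of_sup_eq_top (hH.2 _ (right_lt_sup.mpr hMH))).symm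
    _ ≤ N.relIndex M := Subgroup.relIndex_le_of_le_left hNH Subgroup.FiniteIndex.index_ne_zero

theorem exists_mem_codSetOver_notMem_codSetOver [Finite G] {N M H : Subgroup G} [N.Normal]
    (hM : IsLeast {K : Subgroup G | K.Normal ∧ N < K} M) (hcomm : ⁅M, M⁆ ≤ N) (hH : IsCoatom H)
    (hNH : N ≤ H) (hMH : ¬ M ≤ H) : ∃ n ∈ codSetOver N, n ∉ codSetOver M := by
  obtain ⟨V, _, _, _, ρ, hρ, hker, hlt⟩ := exists_isIrreducible_charKer_eq hM hH hNH hMH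
  have hcommute : ∀ a ∈ M, ∀ b ∈ M, Commute (ρ a) (ρ b) := fun a ha b hb =>
    commute_of_map_commutatorElement_eq_one <| mem_charKer_of.mp <|
      hker.ge <| hcomm <| Subgroup.commutator_mem_commutator ha hb
  have hdeg : 0 < Module.finrank ℂ V :=
    have := nontrivial_of_isIrreducible ρ
    Module.finrank_pos
  have hindex : M.index < codeg (FDRep.of ρ) :=
    index_lt_codeg (hker.trans_le hM.1.2.le) hdeg (finrank_le_index_of_commute ρ M hcommute)
      (hker ▸ hlt)
  exact ⟨_, ⟨_, simple_of_isIrreducible ρ, hker.ge, rfl⟩,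
    fun hmem => hindex.not_ge (le_index_of_mem_codSetOver hmem)⟩

theorem exists_hasNilpotentSeries_lt_ncard_codSetOver [Finite G] [Group.IsSolvable G]
    (N : Subgroup G) [hN : N.Normal] : ∃ k, HasNilpotentSeries N k ∧ k < (codSetOver N).ncard := by
  induction N using WellFoundedGT.induction generalizing hN with
  | ind N ih =>
  by_cases htop : N = ⊤
  · subst htop
    exact ⟨0, .top, (Set.ncard_pos (finite_codSetOver _)).mpr (codSetOver_nonempty _)⟩
  obtain ⟨M, hM, hcomm⟩ := exists_minimal_normal_commutator_le htop
  have := hM.prop.1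
  have hNM : N < M := hM.prop.2
  have ncard_le {K : Subgroup G} (hK : N ≤ K) : (codSetOver K).ncard ≤ (codSetOver N).ncard :=
    Set.ncard_le_ncard (codSetOver_antitone hK) (finite_codSetOver N)
  obtain ⟨a, ha, haM⟩ := ih M hNM
  by_cases hleast : ∃ K : Subgroup G, (K.Normal ∧ N < K) ∧ ¬ M ≤ K
  · obtain ⟨K, ⟨hK, hNK⟩, hMK⟩ := hleast
    have hinf : M ⊓ K = N := (le_inf hNM.le hNK.le).eq_of_not_lt' fun hlt =>
      hMK ((hM.le_of_le ⟨inferInstance, hlt⟩ inf_le_left).trans inf_le_right)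
    obtain ⟨b, hb, hbK⟩ := ih K hNK
    exact ⟨max a b, hinf ▸ ha.inf hb, max_lt (haM.trans_le (ncard_le hNM.le))
      (hbK.trans_le (ncard_le hNK.le))⟩
  by_cases hfrattini : ∀ H : Subgroup G, IsCoatom H → N ≤ H → M ≤ H
  · exact ⟨a, ha.of_forall_isCoatom htop hNM.le hfrattini, haM.trans_le (ncard_le hNM.le)⟩
  push Not at hleast hfrattini
  obtain ⟨H, hH, hNH, hMH⟩ := hfrattini
  obtain ⟨n, hnN, hnM⟩ :=
    exists_mem_codSetOver_notMem_codSetOver ⟨hM.prop, hleast⟩ hcomm hH hNH hMH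
  have hlt : (codSetOver M).ncard < (codSetOver N).ncard := Set.ncard_lt_ncard
    ⟨codSetOver_antitone hNM.le, fun h => hnM (h hnN)⟩ (finite_codSetOver N)
  exact ⟨a + 1, ha.cons ‹_› hNM.le ⟨1, hcomm⟩, by lia⟩

end Codegree

theorem stmt_9 {G : Type} [Group G] [Finite G] [Nontrivial G] (hsol : IsSolvable G) :
    fittingHeight G ≤ (codSet G).ncard - 1 := by
  have : Group.IsSolvable G := hsol
  obtain ⟨k, hk, hlt⟩ := exists_hasNilpotentSeries_lt_ncard_codSetOver (⊥ : Subgroup G)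
  rw [codSetOver_bot] at hlt
  exact (fittingHeight_le_of_hasNilpotentSeries hk).trans (Nat.le_sub_one_of_lt hlt)
end

section
/- Let G be a finite group acting faithfully and fixed-point-freely on a nontrivial finite vector space V (i.e., no nonidentity element of G fixes a nonzero vector). If G is solvable and its Fitting height is at least 3, then the Fitting subgroup F(G) is the direct product of a generalized quaternion 2-group and a cyclic group of odd order. -/
open CategoryTheory

/-!
An abelian group acting fixed-point-freely is cyclic, so every abelian subgroup of `G` is cyclic.
In a `p`-group with this property, take a maximal abelian normal subgroup `⟨a⟩`; it is its own
centralizer. If `x ∉ ⟨a⟩` has `x ^ p ∈ ⟨a⟩`, then no element of the coset `⟨a⟩x` has order `p`,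
since together with the subgroup of order `p` of `⟨a⟩` it would generate a noncyclic abelian group.
Computing `(a ^ j * x) ^ p` for all `j`, this is impossible for odd `p`, and for `p = 2` it forces
the generalized quaternion relations. Hence the Fitting subgroup is either cyclic or of the desired
form. In the first case `G`, being solvable, satisfies `G' ≤ C_G(F(G)) ≤ F(G)`, because the
automorphism group of a cyclic group is abelian, so the Fitting height is at most `2`.
-/

/-- Every abelian subgroup of `G` is cyclic. This is the only consequence of a fixed-point-free
action that the classification of the Fitting subgroup depends on. -/
def AbelianSubgroupsCyclic (G : Type*) [Group G] : Prop :=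
  ∀ A : Subgroup G, IsMulCommutative A → IsCyclic A

section FixedPointFree

variable {G A V : Type*} [Group G] [Finite G] [CommGroup A] [Finite A] [AddCommGroup V]
  [Nontrivial V]

-- An associated prime `I = ann(x)` of the `ℤ[A]`-module `V` exists because `ℤ[A]` is Noetherian,
-- and `A` embeds in the domain `ℤ[A] / I` because `g - 1 ∈ I` means that `g` fixes `x`.
theorem isCyclic_of_forall_smul_ne [DistribMulAction A V]
    (h : ∀ g : A, g ≠ 1 → ∀ v : V, v ≠ 0 → g • v ≠ v) : IsCyclic A := by
  let ρ := Representation.ofDistribMulAction ℤ A V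
  have : IsNoetherianRing (MonoidAlgebra ℤ A) := Algebra.FiniteType.isNoetherianRing ℤ _
  have : Nontrivial ρ.asModule := ρ.asModuleEquiv.toEquiv.nontrivial
  obtain ⟨I, hI⟩ := associatedPrimes.nonempty (MonoidAlgebra ℤ A) ρ.asModule
  obtain ⟨hprime, x, hIx⟩ := isAssociatedPrime_iff.1 hI
  have hx : x ≠ 0 := by
    rintro rfl
    exact hprime.ne_top (by rw [hIx]; ext; simp)
  refine isCyclic_of_injective_ringHom
    ((Ideal.Quotient.mk I).toMonoidHom.comp (MonoidAlgebra.of ℤ A)) ?_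
  rw [injective_iff_map_eq_one]
  intro g hg
  by_contra hne
  have hmem : MonoidAlgebra.of ℤ A g - 1 ∈ I := by
    rw [← Ideal.Quotient.eq_zero_iff_mem, map_sub, map_one, sub_eq_zero]
    exact hg
  have hfix : MonoidAlgebra.of ℤ A g • x = x := by
    rwa [hIx, Submodule.mem_colon_singleton, Submodule.mem_bot, sub_smul, one_smul,
      sub_eq_zero] at hmem
  replace hfix := congrArg ρ.asModuleEquiv hfix
  rw [Representation.asModuleEquiv_map_smul, Representation.asAlgebraHom_of] at hfix
  exact h g hne (ρ.asModuleEquiv x) (by simpa using hx) hfix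

open scoped IsMulCommutative in
theorem abelianSubgroupsCyclic_of_forall_smul_ne [DistribMulAction G V]
    (h : ∀ g : G, g ≠ 1 → ∀ v : V, v ≠ 0 → g • v ≠ v) : AbelianSubgroupsCyclic G :=
  fun A _ => isCyclic_of_forall_smul_ne (A := A) (V := V)
    fun g hg => h g (by simpa using hg)

end FixedPointFree

namespace AbelianSubgroupsCyclic

variable {G : Type*} [Group G]

theorem subgroup (hG : AbelianSubgroupsCyclic G) (H : Subgroup G) : AbelianSubgroupsCyclic H :=
  fun A _ =>
    let e := A.equivMapOfInjective H.subtype H.subtype_injective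
    have := hG (A.map H.subtype) inferInstance
    isCyclic_of_injective e.toMonoidHom e.injective

end AbelianSubgroupsCyclic

theorem mem_zpowers_of_orderOf_dvd {G : Type*} [Group G] [Finite G] [IsCyclic G] {x y : G}
    (h : orderOf y ∣ orderOf x) : y ∈ Subgroup.zpowers x := by
  classical
  have := Fintype.ofFinite G
  let roots : Finset G := {g | g ^ orderOf x = 1}
  let powers : Finset G := {g | g ∈ Subgroup.zpowers x}
  have hsub : powers ⊆ roots := by
    intro g hg
    simp only [powers, roots, Finset.mem_filter_univ] at hg ⊢
    exact orderOf_dvd_iff_pow_eq_one.1 (orderOf_dvd_of_mem_zpowers hg)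
  have hcard : powers.card = orderOf x := by
    rw [← Nat.card_zpowers, Nat.card_eq_fintype_card, Fintype.card_subtype]
  have heq : powers = roots :=
    Finset.eq_of_subset_of_card_le hsub
      (hcard ▸ IsCyclic.card_pow_eq_one_le (orderOf_pos x))
  have hy : y ∈ roots := by simpa [roots] using orderOf_dvd_iff_pow_eq_one.1 h
  rw [← heq] at hy
  simpa [powers] using hy

theorem AbelianSubgroupsCyclic.mem_zpowers_of_commute {G : Type*} [Group G] [Finite G]
    (hG : AbelianSubgroupsCyclic G) {x y : G} (hxy : Commute x y)
    (h : orderOf y ∣ orderOf x) : y ∈ Subgroup.zpowers x := by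
  let A := Subgroup.closure {x, y}
  let x' : A := ⟨x, Subgroup.subset_closure (by simp)⟩
  let y' : A := ⟨y, Subgroup.subset_closure (by simp)⟩
  have : IsMulCommutative A := Subgroup.isMulCommutative_closure <| by
    rintro _ (rfl | rfl) _ (rfl | rfl)
    exacts [rfl, hxy, hxy.symm, rfl]
  have := hG A this
  have hmem : y' ∈ Subgroup.zpowers x' := mem_zpowers_of_orderOf_dvd (by simpa [x', y'] using h)
  simpa [x', y'] using Subgroup.mem_map_of_mem A.subtype hmem

section SelfCentralizing

variable {G : Type*} [Group G]

open scoped commutatorElement in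
theorem exists_notMem_forall_commutator_mem [Group.IsNilpotent G] {A C : Subgroup G} [C.Normal]
    (h : ¬C ≤ A) : ∃ c ∈ C, c ∉ A ∧ ∀ g, ⁅c, g⁆ ∈ A := by
  obtain ⟨n, hn⟩ := Group.IsNilpotent.nilpotent G
  obtain ⟨k, hk, hk'⟩ := Nat.exists_not_and_succ_of_not_zero_of_exists
    (p := fun k => ¬C ⊓ Subgroup.upperCentralSeries G k ≤ A) (by simp) ⟨n, by simpa [hn]⟩
  obtain ⟨c, ⟨hcC, hcZ⟩, hcA⟩ := SetLike.not_le_iff_exists.1 hk'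
  refine ⟨c, hcC, hcA, fun g => not_not.1 hk ⟨?_, Subgroup.mem_upperCentralSeries_succ_iff.1 hcZ g⟩⟩
  exact Subgroup.commutator_le_left C ⊤ (Subgroup.commutator_mem_commutator hcC trivial)

open scoped commutatorElement in
theorem normal_closure_insert {A : Subgroup G} [A.Normal] {c : G} (h : ∀ g, ⁅c, g⁆ ∈ A) :
    (Subgroup.closure (insert c (A : Set G))).Normal := by
  set B := Subgroup.closure (insert c (A : Set G))
  have hcB : c ∈ B := Subgroup.subset_closure (Set.mem_insert ..)
  have hAB : A ≤ B := fun a ha => Subgroup.subset_closure (Set.mem_insert_of_mem _ ha)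
  refine ⟨fun b hb g => ?_⟩
  suffices B ≤ B.comap (MulAut.conj g).toMonoidHom from this hb
  refine (Subgroup.closure_le _).2 (Set.insert_subset ?_ fun a ha => ?_)
  · have hconj : g * c * g⁻¹ = ⁅c, g⁆⁻¹ * c := by rw [commutatorElement_def]; group
    change g * c * g⁻¹ ∈ B
    rw [hconj]
    exact B.mul_mem (B.inv_mem (hAB (h g))) hcB
  · exact hAB (Subgroup.Normal.conj_mem inferInstance a ha g)

theorem isMulCommutative_closure_insert {A : Subgroup G} [IsMulCommutative A] {c : G}
    (hc : c ∈ Subgroup.centralizer (A : Set G)) :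
    IsMulCommutative (Subgroup.closure (insert c (A : Set G))) := by
  rw [Subgroup.mem_centralizer_iff] at hc
  refine Subgroup.isMulCommutative_closure ?_
  rintro x (rfl | hx) y (rfl | hy)
  exacts [rfl, (hc y hy).symm, hc x hx, setLike_mul_comm hx hy]

variable (G) in
theorem exists_normal_isMulCommutative_centralizer_le [Finite G] [Group.IsNilpotent G] :
    ∃ A : Subgroup G, A.Normal ∧ IsMulCommutative A ∧ Subgroup.centralizer (A : Set G) ≤ A := by
  obtain ⟨A, ⟨hnormal, hcomm⟩, hmax⟩ :=
    (Set.toFinite {A : Subgroup G | A.Normal ∧ IsMulCommutative A}).exists_maximal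
      ⟨⊥, inferInstance, inferInstance⟩
  refine ⟨A, hnormal, hcomm, ?_⟩
  by_contra hle
  obtain ⟨c, hcC, hcA, hc⟩ := exists_notMem_forall_commutator_mem hle
  have hBA := hmax ⟨normal_closure_insert hc, isMulCommutative_closure_insert hcC⟩
    fun a ha => Subgroup.subset_closure (Set.mem_insert_of_mem _ ha)
  exact hcA (hBA (Subgroup.subset_closure (Set.mem_insert ..)))

theorem AbelianSubgroupsCyclic.exists_normal_zpowers_centralizer_le [Finite G]
    [Group.IsNilpotent G] (hG : AbelianSubgroupsCyclic G) :
    ∃ a : G, (Subgroup.zpowers a).Normal ∧ Subgroup.centralizer {a} ≤ Subgroup.zpowers a := by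
  obtain ⟨A, hnormal, hcomm, hself⟩ := exists_normal_isMulCommutative_centralizer_le G
  obtain ⟨a, rfl⟩ := (Subgroup.isCyclic_iff_exists_zpowers_eq_top A).1 (hG A hcomm)
  rw [Subgroup.zpowers_eq_closure, Subgroup.centralizer_closure] at *
  exact ⟨a, by simpa [Subgroup.zpowers_eq_closure] using ⟨hnormal, hself⟩⟩

end SelfCentralizing

section Semiconj

variable {G : Type*} [Group G] {a x : G} {r s : ℤ}

theorem exists_semiconjBy_zpow [h : (Subgroup.zpowers a).Normal] (x : G) :
    ∃ r : ℤ, SemiconjBy x a (a ^ r) := by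
  obtain ⟨r, hr⟩ := h.conj_mem a (Subgroup.mem_zpowers a) x
  exact ⟨r, by simp only at hr; simp [hr, SemiconjBy]⟩

theorem semiconjBy_pow (h : SemiconjBy x a (a ^ r)) (m : ℕ) :
    SemiconjBy (x ^ m) a (a ^ r ^ m) := by
  induction m with
  | zero => simp
  | succ m ih =>
    rw [pow_succ', pow_succ', zpow_mul]
    exact (h.zpow_right (r ^ m)).mul_left ih

theorem commute_zpow_iff_orderOf_dvd (h : SemiconjBy x a (a ^ r)) :
    Commute x (a ^ s) ↔ (orderOf a : ℤ) ∣ s * (r - 1) := by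
  have hconj : x * a ^ s = a ^ (s * r) * x := by
    rw [mul_comm s, zpow_mul]
    exact h.zpow_right s
  rw [orderOf_dvd_iff_zpow_eq_one, mul_sub, mul_one, zpow_sub, mul_inv_eq_one, commute_iff_eq,
    hconj, mul_left_inj]

theorem zpow_mul_pow_eq (h : SemiconjBy x a (a ^ r)) (j : ℤ) (m : ℕ) :
    (a ^ j * x) ^ m = a ^ (j * ∑ i ∈ Finset.range m, r ^ i) * x ^ m := by
  induction m with
  | zero => simp
  | succ m ih =>
    set t := ∑ i ∈ Finset.range m, r ^ i
    have hconj : x * a ^ (j * t) = a ^ (r * (j * t)) * x := by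
      rw [zpow_mul a r]
      exact h.zpow_right _
    calc (a ^ j * x) ^ (m + 1) = a ^ j * (x * a ^ (j * t)) * x ^ m := by
          rw [pow_succ', ih]
          group
      _ = a ^ (j * (r * t + 1)) * x ^ (m + 1) := by
          rw [hconj, pow_succ']
          group
      _ = _ := by rw [geom_sum_succ]

end Semiconj

theorem exists_pow_dvd_mul_add {R : Type*} [CommRing R] {p t s : R} (n : ℕ) (ht : p ^ 2 ∣ t - p)
    (hs : p ∣ s) : ∃ j, p ^ n ∣ j * t + s := by
  obtain ⟨u, hu⟩ := ht
  obtain ⟨s', rfl⟩ := hs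
  obtain ⟨α, β, h⟩ : IsCoprime (1 + p * u) (p ^ n) := IsCoprime.pow_right ⟨1, -u, by ring⟩
  exact ⟨-s' * α, p * s' * β, by linear_combination -(p * s') * h - s' * α * hu⟩

section PGroup

variable {G : Type*} [Group G] {p : ℕ} {a x y : G} {r s : ℤ}

theorem exists_pow_notMem_pow_mem (hp : IsPGroup p G) {A : Subgroup G} (hx : x ∉ A) :
    ∃ k : ℕ, x ^ p ^ k ∉ A ∧ (x ^ p ^ k) ^ p ∈ A := by
  obtain ⟨n, hn⟩ := hp x
  obtain ⟨k, hk, hk'⟩ := Nat.exists_not_and_succ_of_not_zero_of_exists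
    (p := fun k => x ^ p ^ k ∈ A) (by simpa using hx) ⟨n, by simp [hn]⟩
  exact ⟨k, hk, by rwa [← pow_mul, ← pow_succ]⟩

theorem commute_of_coprime_orderOf_of_isPGroup [Fact p.Prime] (hp : IsPGroup p G)
    (h : (orderOf x).Coprime (orderOf y)) : Commute x y := by
  by_cases hx : x = 1
  · exact hx ▸ Commute.one_left y
  by_cases hy : y = 1
  · exact hy ▸ Commute.one_right x
  exact absurd h (Nat.not_coprime_of_dvd_of_dvd (Nat.Prime.one_lt Fact.out) (hp.dvd_orderOf hx)
    (hp.dvd_orderOf hy))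

theorem AbelianSubgroupsCyclic.pow_ne_one [Finite G] (hG : AbelianSubgroupsCyclic G)
    (ha : p ∣ orderOf a) (hr : SemiconjBy x a (a ^ r)) (hpr : (p : ℤ) ∣ r - 1)
    (hx : x ∉ Subgroup.zpowers a) : x ^ p ≠ 1 := by
  intro hxp
  set z := a ^ (orderOf a / p) with hz
  have hzp : orderOf z = p := orderOf_pow_orderOf_div (orderOf_pos a).ne' ha
  have hcomm : Commute x z := by
    rw [hz, ← zpow_natCast, commute_zpow_iff_orderOf_dvd hr]
    calc (orderOf a : ℤ) = ((orderOf a / p : ℕ) : ℤ) * p := by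
          exact_mod_cast (Nat.div_mul_cancel ha).symm
      _ ∣ _ := mul_dvd_mul_left _ hpr
  have hxz := hG.mem_zpowers_of_commute hcomm.symm (hzp ▸ orderOf_dvd_of_pow_eq_one hxp)
  exact hx (Subgroup.zpowers_le.2 (Subgroup.npow_mem_zpowers a _) hxz)

theorem dvd_orderOf_of_notMem [Fact p.Prime] (hp : IsPGroup p G)
    (hself : Subgroup.centralizer {a} ≤ Subgroup.zpowers a) (hx : x ∉ Subgroup.zpowers a) :
    p ∣ orderOf a := by
  refine hp.dvd_orderOf ?_
  rintro rfl
  exact hx (hself (by simp [Subgroup.mem_centralizer_iff]))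

theorem dvd_of_pow_eq_zpow [Fact p.Prime] (hp : IsPGroup p G)
    (hself : Subgroup.centralizer {a} ≤ Subgroup.zpowers a) (hx : x ∉ Subgroup.zpowers a)
    (hs : x ^ p = a ^ s) : (p : ℤ) ∣ s := by
  by_contra hps
  obtain ⟨n, hn⟩ := IsPGroup.iff_orderOf.1 hp a
  have hcop : s.gcd (orderOf a) = 1 := by
    rw [← Int.isCoprime_iff_gcd_eq_one, hn, Nat.cast_pow]
    exact (((Nat.prime_iff_prime_int.1 Fact.out).coprime_iff_not_dvd.2 hps).pow_left).symm
  obtain ⟨k, hk⟩ := mem_zpowers_zpow_iff.2 hcop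
  refine hx (hself (Subgroup.mem_centralizer_singleton_iff.2 ?_))
  have hcomm : Commute x ((x ^ p) ^ k) := ((Commute.refl x).pow_right p).zpow_right k
  rw [hs] at hcomm
  rw [← hk]
  exact hcomm

theorem dvd_sub_one_of_pow_eq_zpow [Fact p.Prime] (ha : p ∣ orderOf a)
    (hr : SemiconjBy x a (a ^ r)) (hs : x ^ p = a ^ s) : (p : ℤ) ∣ r - 1 := by
  have hcomm : Commute (x ^ p) (a ^ (1 : ℤ)) := by
    rw [hs]
    exact (Commute.refl a).zpow_zpow s 1
  have hdvd : (p : ℤ) ∣ r ^ p - 1 := by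
    refine (Int.natCast_dvd_natCast.2 ha).trans ?_
    simpa using (commute_zpow_iff_orderOf_dvd (semiconjBy_pow hr p)).1 hcomm
  rw [← ZMod.intCast_zmod_eq_zero_iff_dvd] at hdvd ⊢
  push_cast at hdvd ⊢
  rwa [ZMod.pow_card] at hdvd

theorem AbelianSubgroupsCyclic.zpow_geom_sum_ne_one [Finite G] [Fact p.Prime]
    (hG : AbelianSubgroupsCyclic G) (hp : IsPGroup p G)
    (hself : Subgroup.centralizer {a} ≤ Subgroup.zpowers a)
    (hx : x ∉ Subgroup.zpowers a) (hr : SemiconjBy x a (a ^ r)) (hs : x ^ p = a ^ s) (j : ℤ) :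
    a ^ (j * ∑ i ∈ Finset.range p, r ^ i + s) ≠ 1 := by
  have ha := dvd_orderOf_of_notMem hp hself hx
  rw [zpow_add, ← hs, ← zpow_mul_pow_eq hr]
  refine hG.pow_ne_one (a := a) (r := r) ha ?_ (dvd_sub_one_of_pow_eq_zpow ha hr hs) ?_
  · exact SemiconjBy.mul_left ((Commute.refl a).zpow_zpow j r) hr
  · rwa [Subgroup.mul_mem_cancel_left _ (Subgroup.zpow_mem_zpowers a j)]

theorem AbelianSubgroupsCyclic.mem_zpowers_of_pow_mem_of_odd [Finite G] [Fact p.Prime]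
    (hG : AbelianSubgroupsCyclic G) (hp : IsPGroup p G) (hodd : Odd p)
    (hself : Subgroup.centralizer {a} ≤ Subgroup.zpowers a)
    (hr : SemiconjBy x a (a ^ r)) (hs : x ^ p = a ^ s) : x ∈ Subgroup.zpowers a := by
  by_contra hx
  have ha := dvd_orderOf_of_notMem hp hself hx
  obtain ⟨b, hb⟩ := dvd_sub_one_of_pow_eq_zpow ha hr hs
  obtain rfl : r = 1 + p * b := by linear_combination hb
  have hsum := odd_sq_dvd_geom_sum₂_sub (R := ℤ) (a := 1) b hodd
  simp only [one_pow, mul_one] at hsum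
  obtain ⟨n, hn⟩ := IsPGroup.iff_orderOf.1 hp a
  obtain ⟨j, hj⟩ := exists_pow_dvd_mul_add n hsum (dvd_of_pow_eq_zpow hp hself hx hs)
  refine hG.zpow_geom_sum_ne_one hp hself hx hr hs j ?_
  rwa [← orderOf_dvd_iff_zpow_eq_one, hn, Nat.cast_pow]

theorem AbelianSubgroupsCyclic.isCyclic_of_isPGroup_of_odd [Finite G] [Fact p.Prime]
    (hG : AbelianSubgroupsCyclic G) (hp : IsPGroup p G) (hodd : Odd p) : IsCyclic G := by
  have := hp.isNilpotent
  obtain ⟨a, hnormal, hself⟩ := hG.exists_normal_zpowers_centralizer_le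
  refine ⟨a, fun x => ?_⟩
  by_contra hx
  obtain ⟨k, hk, s, hs⟩ := exists_pow_notMem_pow_mem hp (A := Subgroup.zpowers a) hx
  obtain ⟨r, hr⟩ := exists_semiconjBy_zpow (a := a) (x ^ p ^ k)
  exact hk (hG.mem_zpowers_of_pow_mem_of_odd hp hodd hself hr hs.symm)

end PGroup

section TwoGroup

variable {G : Type*} [Group G] {a x y : G} {r s t : ℤ} {k : ℕ}

theorem zpow_eq_one_or_eq_of_orderOf_dvd (ha : orderOf a = 2 ^ (k + 1)) (hr : 4 ∣ r + 1)
    (ht : (orderOf a : ℤ) ∣ t * (r - 1)) : a ^ t = 1 ∨ a ^ t = a ^ 2 ^ k := by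
  obtain ⟨c, hc⟩ := hr
  have hhalf : (2 ^ k : ℤ) ∣ t * (2 * c - 1) := by
    refine (mul_dvd_mul_iff_left two_ne_zero).1 ?_
    calc (2 * 2 ^ k : ℤ) = orderOf a := by rw [ha]; push_cast; ring
      _ ∣ t * (r - 1) := ht
      _ = 2 * (t * (2 * c - 1)) := by linear_combination t * hc
  have hcop : IsCoprime (2 ^ k : ℤ) (2 * c - 1) := IsCoprime.pow_left ⟨c, -1, by ring⟩
  obtain ⟨u, rfl⟩ := hcop.dvd_of_dvd_mul_right hhalf
  have hone : (a ^ 2 ^ k) ^ 2 = 1 := by rw [← pow_mul, ← pow_succ, ← ha, pow_orderOf_eq_one]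
  have hpow : a ^ (2 ^ k * u) = (a ^ 2 ^ k) ^ u := by
    rw [zpow_mul, ← zpow_natCast a]
    push_cast
    rfl
  rw [hpow]
  rcases Int.even_or_odd' u with ⟨v, rfl | rfl⟩
  · left
    rw [zpow_mul, zpow_ofNat, hone, one_zpow]
  · right
    rw [zpow_add, zpow_mul, zpow_ofNat, hone, one_zpow, one_mul, zpow_one]

namespace AbelianSubgroupsCyclic

variable [Finite G]

-- If `r ≡ 1 [ZMOD 4]`, then `a ^ j * x` is an involution outside `zpowers a` for a suitable `j`.
theorem four_dvd_add_one (hG : AbelianSubgroupsCyclic G) (hp : IsPGroup 2 G)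
    (hself : Subgroup.centralizer {a} ≤ Subgroup.zpowers a) (hx : x ∉ Subgroup.zpowers a)
    (hr : SemiconjBy x a (a ^ r)) (hs : x ^ 2 = a ^ s) : 4 ∣ r + 1 := by
  have hodd := dvd_sub_one_of_pow_eq_zpow (dvd_orderOf_of_notMem hp hself hx) hr hs
  by_contra hmod
  have hsum : (2 : ℤ) ^ 2 ∣ ∑ i ∈ Finset.range 2, r ^ i - 2 := by
    simp only [Finset.sum_range_succ, Finset.sum_range_zero]
    lia
  obtain ⟨n, hn⟩ := IsPGroup.iff_orderOf.1 hp a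
  obtain ⟨j, hj⟩ := exists_pow_dvd_mul_add n hsum (dvd_of_pow_eq_zpow hp hself hx hs)
  refine hG.zpow_geom_sum_ne_one hp hself hx hr hs j ?_
  rw [← orderOf_dvd_iff_zpow_eq_one, hn]
  exact_mod_cast hj

theorem sq_eq_of_sq_eq_zpow (hG : AbelianSubgroupsCyclic G) (hp : IsPGroup 2 G)
    (hself : Subgroup.centralizer {a} ≤ Subgroup.zpowers a) (hx : x ∉ Subgroup.zpowers a)
    (ha : orderOf a = 2 ^ (k + 1)) (hr : SemiconjBy x a (a ^ r)) (hs : x ^ 2 = a ^ s) :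
    x ^ 2 = a ^ 2 ^ k := by
  have hne : a ^ s ≠ 1 := by simpa using hG.zpow_geom_sum_ne_one hp hself hx hr hs 0
  have hcomm : Commute x (a ^ s) := hs ▸ (Commute.refl x).pow_right 2
  rw [hs]
  exact (zpow_eq_one_or_eq_of_orderOf_dvd ha (hG.four_dvd_add_one hp hself hx hr hs)
    ((commute_zpow_iff_orderOf_dvd hr).1 hcomm)).resolve_left hne

theorem semiconjBy_inv_of_sq_eq_zpow (hG : AbelianSubgroupsCyclic G) (hp : IsPGroup 2 G)
    (hself : Subgroup.centralizer {a} ≤ Subgroup.zpowers a) (hx : x ∉ Subgroup.zpowers a)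
    (ha : orderOf a = 2 ^ (k + 1)) (hr : SemiconjBy x a (a ^ r)) (hs : x ^ 2 = a ^ s) :
    SemiconjBy x a a⁻¹ := by
  have hsq := hG.sq_eq_of_sq_eq_zpow hp hself hx ha hr hs
  have hdvd : (orderOf a : ℤ) ∣ (r + 1) * (r - 1) := by
    have hcomm : Commute (x ^ 2) (a ^ (1 : ℤ)) := hs ▸ (Commute.refl a).zpow_zpow s 1
    have hdvd := (commute_zpow_iff_orderOf_dvd (semiconjBy_pow hr 2)).1 hcomm
    rwa [one_mul, show r ^ 2 - 1 = (r + 1) * (r - 1) by ring] at hdvd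
  have hne : a ^ (r + 1) ≠ a ^ 2 ^ k := by
    have hne := hG.zpow_geom_sum_ne_one hp hself hx hr hs 1
    rw [one_mul, zpow_add, ← hs, hsq] at hne
    simp only [Finset.sum_range_succ, Finset.sum_range_zero, pow_zero, pow_one, zero_add] at hne
    rw [add_comm r]
    intro h
    rw [h, ← pow_add, ← two_mul, ← pow_succ', ← ha, pow_orderOf_eq_one] at hne
    exact hne rfl
  have hone := (zpow_eq_one_or_eq_of_orderOf_dvd ha
    (hG.four_dvd_add_one hp hself hx hr hs) hdvd).resolve_right hne
  rw [zpow_add_one, mul_eq_one_iff_eq_inv] at hone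
  rwa [hone] at hr

end AbelianSubgroupsCyclic

theorem not_semiconjBy_sq_inv (ha : 4 ∣ orderOf a) (hr : SemiconjBy y a (a ^ r)) :
    ¬SemiconjBy (y ^ 2) a a⁻¹ := by
  intro hinv
  have heq : a ^ r ^ 2 = a⁻¹ := mul_right_cancel ((semiconjBy_pow hr 2).symm.trans hinv)
  have hdvd : (4 : ℤ) ∣ r ^ 2 + 1 := by
    refine (Int.natCast_dvd_natCast.2 ha).trans (orderOf_dvd_iff_zpow_eq_one.2 ?_)
    rw [zpow_add_one, heq, inv_mul_cancel]
  rcases Int.even_or_odd' r with ⟨c, rfl | rfl⟩ <;> ring_nf at hdvd <;> lia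

theorem sq_ne_one_of_semiconjBy_inv (hself : Subgroup.centralizer {a} ≤ Subgroup.zpowers a)
    (hx : x ∉ Subgroup.zpowers a) (hinv : SemiconjBy x a a⁻¹) : a ^ 2 ≠ 1 := by
  intro hsq
  rw [inv_eq_of_mul_eq_one_left (sq a ▸ hsq)] at hinv
  exact hx (hself (Subgroup.mem_centralizer_singleton_iff.2 hinv))

theorem AbelianSubgroupsCyclic.one_le_and_sq_eq_and_semiconjBy_inv [Finite G]
    (hG : AbelianSubgroupsCyclic G) (hp : IsPGroup 2 G) [(Subgroup.zpowers a).Normal]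
    (hself : Subgroup.centralizer {a} ≤ Subgroup.zpowers a) (ha : orderOf a = 2 ^ (k + 1))
    (hy : y ∉ Subgroup.zpowers a) : 1 ≤ k ∧ y ^ 2 = a ^ 2 ^ k ∧ SemiconjBy y a a⁻¹ := by
  obtain ⟨j, hj, s, hs⟩ := exists_pow_notMem_pow_mem hp hy
  obtain ⟨r, hr⟩ := exists_semiconjBy_zpow (a := a) (y ^ 2 ^ j)
  have hinv := hG.semiconjBy_inv_of_sq_eq_zpow hp hself hj ha hr hs.symm
  have hk : 1 ≤ k := by
    by_contra! hk
    obtain rfl : k = 0 := by lia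
    exact sq_ne_one_of_semiconjBy_inv hself hj hinv (by simpa [ha] using pow_orderOf_eq_one a)
  cases j with
  | zero =>
    rw [pow_zero, pow_one] at *
    exact ⟨hk, hG.sq_eq_of_sq_eq_zpow hp hself hy ha hr hs.symm, hinv⟩
  | succ j =>
    obtain ⟨t, ht⟩ := exists_semiconjBy_zpow (a := a) (y ^ 2 ^ j)
    rw [pow_succ, pow_mul] at hinv
    refine absurd hinv (not_semiconjBy_sq_inv ?_ ht)
    rw [ha]
    exact pow_dvd_pow 2 (by lia : 2 ≤ k + 1)

end TwoGroup

section QuaternionGroup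

variable {G : Type*} [Group G] {a x : G} {n : ℕ}

theorem zpow_eq_zpow_of_intCast_eq (ha : a ^ n = 1) {k l : ℤ} (h : (k : ZMod n) = l) :
    a ^ k = a ^ l :=
  zpow_eq_zpow_iff_modEq.2 <| ((ZMod.intCast_eq_intCast_iff _ _ _).1 h).of_dvd <|
    Int.natCast_dvd_natCast.2 (orderOf_dvd_of_pow_eq_one ha)

/-- The homomorphism from the generalized quaternion group of order `4 * n` determined by a pair
`a`, `x` satisfying its defining relations; exponents in `ZMod (2 * n)` are lifted to `ℤ`. -/
def quaternionGroupLift (ha : a ^ (2 * n) = 1) (hx : x ^ 2 = a ^ n) (hinv : SemiconjBy x a a⁻¹) :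
    QuaternionGroup n →* G where
  toFun
    | .a i => a ^ (i.cast : ℤ)
    | .xa i => x * a ^ (i.cast : ℤ)
  map_one' := by
    change a ^ ((0 : ZMod (2 * n)).cast : ℤ) = 1
    rw [ZMod.cast_zero, zpow_zero]
  map_mul' := by
    have hconj (k : ℤ) : a ^ k * x = x * a ^ (-k) := by
      simpa using (hinv.zpow_right (-k)).symm
    rintro (i | i) (j | j)
    · simp only [QuaternionGroup.a_mul_a, ← zpow_add]
      exact zpow_eq_zpow_of_intCast_eq ha (by simp)
    · simp only [QuaternionGroup.a_mul_xa, ← mul_assoc, hconj]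
      rw [mul_assoc, ← zpow_add]
      exact congrArg (x * ·) (zpow_eq_zpow_of_intCast_eq ha (by simp [sub_eq_neg_add]))
    · simp only [QuaternionGroup.xa_mul_a, mul_assoc, ← zpow_add]
      exact congrArg (x * ·) (zpow_eq_zpow_of_intCast_eq ha (by simp))
    · have hmul : x * a ^ (i.cast : ℤ) * (x * a ^ (j.cast : ℤ)) =
          a ^ (n + (-i.cast + j.cast) : ℤ) := by
        rw [mul_assoc, ← mul_assoc (a ^ _), hconj, mul_assoc, ← mul_assoc, ← sq, hx, ← zpow_add,
          ← zpow_natCast, ← zpow_add]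
      simp only [QuaternionGroup.xa_mul_xa, hmul]
      exact zpow_eq_zpow_of_intCast_eq ha (by simp; ring)

theorem quaternionGroupLift_injective (ha : orderOf a = 2 * n) (hx : x ^ 2 = a ^ n)
    (hinv : SemiconjBy x a a⁻¹) (hmem : x ∉ Subgroup.zpowers a) :
    Function.Injective (quaternionGroupLift (ha ▸ pow_orderOf_eq_one a) hx hinv) := by
  rw [injective_iff_map_eq_one]
  rintro (i | i) h
  · replace h : a ^ (i.cast : ℤ) = 1 := h
    rw [← orderOf_dvd_iff_zpow_eq_one, ha, ← ZMod.intCast_zmod_eq_zero_iff_dvd,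
      ZMod.intCast_zmod_cast] at h
    rw [h, QuaternionGroup.a_zero]
  · refine absurd ?_ hmem
    rw [eq_inv_of_mul_eq_one_left (h : x * a ^ (i.cast : ℤ) = 1)]
    exact Subgroup.inv_mem _ (Subgroup.zpow_mem_zpowers a _)

theorem quaternionGroupLift_surjective (ha : a ^ (2 * n) = 1) (hx : x ^ 2 = a ^ n)
    (hinv : SemiconjBy x a a⁻¹)
    (hcover : ∀ y, y ∈ Subgroup.zpowers a ∨ x⁻¹ * y ∈ Subgroup.zpowers a) :
    Function.Surjective (quaternionGroupLift ha hx hinv) := by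
  intro y
  rcases hcover y with ⟨k, hk⟩ | ⟨k, hk⟩
  · exact ⟨.a k, (zpow_eq_zpow_of_intCast_eq ha (by simp)).trans hk⟩
  · refine ⟨.xa k, ?_⟩
    rw [← eq_inv_mul_iff_mul_eq.1 hk]
    exact congrArg (x * ·) (zpow_eq_zpow_of_intCast_eq ha (by simp))

theorem AbelianSubgroupsCyclic.isCyclic_or_quaternionGroup [Finite G]
    (hG : AbelianSubgroupsCyclic G) (hp : IsPGroup 2 G) :
    IsCyclic G ∨ ∃ k, 1 ≤ k ∧ Nonempty (G ≃* QuaternionGroup (2 ^ k)) := by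
  have := hp.isNilpotent
  obtain ⟨a, hnormal, hself⟩ := hG.exists_normal_zpowers_centralizer_le
  by_cases hcyc : ∀ x, x ∈ Subgroup.zpowers a
  · exact .inl ⟨a, hcyc⟩
  obtain ⟨x, hx⟩ := not_forall.1 hcyc
  obtain ⟨k, ha⟩ : ∃ k, orderOf a = 2 ^ (k + 1) := by
    obtain ⟨n, hn⟩ := IsPGroup.iff_orderOf.1 hp a
    obtain ⟨k, rfl⟩ := Nat.exists_eq_succ_of_ne_zero (n := n) (by
      rintro rfl
      simpa [hn] using dvd_orderOf_of_notMem hp hself hx)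
    exact ⟨k, hn⟩
  have hstruct {y : G} (hy : y ∉ Subgroup.zpowers a) :=
    hG.one_le_and_sq_eq_and_semiconjBy_inv hp hself ha hy
  obtain ⟨hk, hsq, hinv⟩ := hstruct hx
  have hcover (y : G) : y ∈ Subgroup.zpowers a ∨ x⁻¹ * y ∈ Subgroup.zpowers a := by
    refine or_iff_not_imp_left.2 fun hy => hself (Subgroup.mem_centralizer_singleton_iff.2 ?_)
    have hcancel : SemiconjBy (x⁻¹ * y) a a :=
      (SemiconjBy.inv_symm_left_iff.2 hinv).mul_left (hstruct hy).2.2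
    exact hcancel
  rw [pow_succ'] at ha
  exact .inr ⟨k, hk, ⟨(MulEquiv.ofBijective _
    ⟨quaternionGroupLift_injective ha hsq hinv hx,
      quaternionGroupLift_surjective _ hsq hinv hcover⟩).symm⟩⟩

end QuaternionGroup

section Nilpotent

variable {G : Type*} [Group G] [Finite G]

theorem commute_of_coprime_orderOf [Group.IsNilpotent G] {x y : G}
    (h : (orderOf x).Coprime (orderOf y)) : Commute x y := by
  obtain ⟨e⟩ := (Group.isNilpotent_of_finite_tfae.out 0 4 rfl rfl).1 ‹Group.IsNilpotent G›
  suffices Commute (e.symm x) (e.symm y) by simpa using this.map e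
  refine funext fun p => funext fun P => ?_
  have : Fact (p : ℕ).Prime := ⟨Nat.prime_of_mem_primeFactors p.2⟩
  let π : G →* P := (Pi.evalMonoidHom (fun P : Sylow p G => (P : Subgroup G)) P).comp <|
    (Pi.evalMonoidHom
      (fun p : (Nat.card G).primeFactors => ∀ P : Sylow p G, (P : Subgroup G)) p).comp
        e.symm.toMonoidHom
  exact commute_of_coprime_orderOf_of_isPGroup P.isPGroup' <|
    h.of_dvd (orderOf_map_dvd π x) (orderOf_map_dvd π y)

theorem exists_mulEquiv_sylow_prod [Group.IsNilpotent G] {p : ℕ} [Fact p.Prime] (P : Sylow p G) :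
    ∃ H : Subgroup G, ¬p ∣ Nat.card H ∧ Nonempty (G ≃* P × H) := by
  obtain ⟨H, hH⟩ := Subgroup.exists_right_complement'_of_coprime P.card_coprime_index
  have hcard : Nat.card H = P.index := hH.symm.index_eq_card.symm
  have hcomm (x : P) (y : H) : Commute (x : G) (y : G) := by
    refine commute_of_coprime_orderOf ?_
    rw [Subgroup.orderOf_coe, Subgroup.orderOf_coe]
    exact P.card_coprime_index.of_dvd (orderOf_dvd_natCard x) (hcard ▸ orderOf_dvd_natCard y)
  exact ⟨H, hcard ▸ P.not_dvd_index,
    ⟨(MulEquiv.ofBijective ((P : Subgroup G).subtype.noncommCoprod H.subtype hcomm) hH).symm⟩⟩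

theorem AbelianSubgroupsCyclic.isZGroup (hG : AbelianSubgroupsCyclic G)
    (h : ∀ P : Sylow 2 G, IsCyclic P) : IsZGroup G := by
  refine ⟨fun p hp P => ?_⟩
  have : Fact p.Prime := ⟨hp⟩
  rcases hp.eq_two_or_odd' with rfl | hodd
  · exact h P
  · exact (hG.subgroup P).isCyclic_of_isPGroup_of_odd P.isPGroup' hodd

theorem AbelianSubgroupsCyclic.isCyclic_of_odd_card [Group.IsNilpotent G]
    (hG : AbelianSubgroupsCyclic G) (hodd : Odd (Nat.card G)) : IsCyclic G := by
  have : IsZGroup G := hG.isZGroup fun P => by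
    have hcard : Nat.card P = 1 := P.isPGroup'.card_eq_or_dvd.resolve_right fun h =>
      hodd.not_two_dvd_nat (h.trans (P : Subgroup G).card_subgroup_dvd_card)
    have := (Nat.card_eq_one_iff_unique.1 hcard).1
    infer_instance
  infer_instance

theorem AbelianSubgroupsCyclic.isCyclic_or_quaternionGroup_prod [Group.IsNilpotent G]
    (hG : AbelianSubgroupsCyclic G) :
    IsCyclic G ∨ ∃ k m : ℕ, 1 ≤ k ∧ Odd m ∧
      Nonempty (G ≃* QuaternionGroup (2 ^ k) × Multiplicative (ZMod m)) := by
  by_cases hcyc : ∀ P : Sylow 2 G, IsCyclic P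
  · have := hG.isZGroup hcyc
    exact .inl inferInstance
  obtain ⟨P, hP⟩ := not_forall.1 hcyc
  obtain ⟨k, hk, ⟨eP⟩⟩ :=
    ((hG.subgroup P).isCyclic_or_quaternionGroup P.isPGroup').resolve_left hP
  obtain ⟨H, hH, ⟨e⟩⟩ := exists_mulEquiv_sylow_prod P
  have hodd : Odd (Nat.card H) := Nat.odd_iff.2 (by lia)
  have := (hG.subgroup H).isCyclic_of_odd_card hodd
  exact .inr ⟨k, Nat.card H, hk, hodd, ⟨e.trans (eP.prodCongr (zmodCyclicMulEquiv this).symm)⟩⟩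

end Nilpotent

section Fitting

variable {G : Type*} [Group G]

theorem isNilpotent_of_commutator_le_of_le_centralizer {N D : Subgroup G} (hcomm : ⁅D, D⁆ ≤ N)
    (hcent : D ≤ Subgroup.centralizer (N : Set G)) : Group.IsNilpotent D := by
  refine Subgroup.isNilpotent_of_lowerCentralSeries_eq_bot (n := 2) ?_
  rw [Subgroup.lowerCentralSeries_succ, Subgroup.lowerCentralSeries_succ,
    Subgroup.lowerCentralSeries_zero, eq_bot_iff]
  calc ⁅⁅D, D⁆, D⁆ ≤ ⁅N, Subgroup.centralizer (N : Set G)⁆ := Subgroup.commutator_mono hcomm hcent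
    _ = ⁅Subgroup.centralizer (N : Set G), N⁆ := Subgroup.commutator_comm ..
    _ = ⊥ := Subgroup.commutator_eq_bot_iff_le_centralizer.2 le_rfl

-- The derived series of `C = centralizer N` reaches `⊥`; any term `D` with `⁅D, D⁆ ≤ N` is
-- nilpotent of class at most two because it centralizes `N`, hence is itself contained in `N`.
theorem centralizer_le_of_isGreatest [Group.IsSolvable G] {N : Subgroup G}
    (hN : IsGreatest {N : Subgroup G | N.Normal ∧ Group.IsNilpotent N} N) :
    Subgroup.centralizer (N : Set G) ≤ N := by
  let C := Subgroup.centralizer (N : Set G)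
  have := hN.1.1
  let D (k : ℕ) : Subgroup G := (derivedSeries C k).map C.subtype
  have hDsucc (k : ℕ) : D (k + 1) = ⁅D k, D k⁆ := Subgroup.map_commutator ..
  have hDzero : D 0 = C := by simp [D, ← MonoidHom.range_eq_map]
  obtain ⟨n, hn⟩ := Group.IsSolvable.solvable (G := C)
  have hDn : D n ≤ N := by simp [D, hn]
  change C ≤ N
  rw [← hDzero]
  refine Nat.decreasingInduction (motive := fun k _ => D k ≤ N)
    (fun k _ hk => hN.2 ⟨inferInstance, ?_⟩) hDn n.zero_le
  exact isNilpotent_of_commutator_le_of_le_centralizer (hDsucc k ▸ hk) (Subgroup.map_subtype_le _)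

theorem commutator_le_centralizer_of_isCyclic (N : Subgroup G) [N.Normal] [hN : IsCyclic N] :
    commutator G ≤ Subgroup.centralizer (N : Set G) := by
  let _ := (hN.mulAutMulEquiv N).toMonoidHom.commGroupOfInjective (hN.mulAutMulEquiv N).injective
  have hker := Abelianization.commutator_subset_ker (MulAut.conjNormal (H := N))
  refine hker.trans fun g hg => Subgroup.mem_centralizer_iff.2 fun x hx => ?_
  have h := congrArg Subtype.val (DFunLike.congr_fun hg ⟨x, hx⟩)
  rw [MulAut.conjNormal_apply] at h
  exact (mul_inv_eq_iff_eq_mul.1 h).symm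

end Fitting

section FittingHeight

variable {G : Type} [Group G]

theorem nilpotentFactor_of_commutator_le {N M : Subgroup G} (h : ⁅M, M⁆ ≤ N) :
    nilpotentFactor N M :=
  ⟨1, h⟩

theorem fittingHeight_le_two {N : Subgroup G} [hN : N.Normal] (hbot : nilpotentFactor ⊥ N)
    (htop : nilpotentFactor N ⊤) : fittingHeight G ≤ 2 := by
  refine Nat.sInf_le ⟨![⊥, N, ⊤], rfl, rfl, ?_, ?_, ?_⟩
  · rw [Fin.forall_fin_succ, Fin.forall_fin_two]
    exact ⟨Subgroup.normal_bot, hN, Subgroup.normal_top⟩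
  · rw [Fin.forall_fin_two]
    exact ⟨bot_le (a := N), le_top (a := N)⟩
  · rw [Fin.forall_fin_two]
    exact ⟨hbot, htop⟩

theorem fittingHeight_le_two_of_isCyclic [Group.IsSolvable G] {N : Subgroup G}
    (hN : IsGreatest {N : Subgroup G | N.Normal ∧ Group.IsNilpotent N} N) [IsCyclic N] :
    fittingHeight G ≤ 2 := by
  have := hN.1.1
  have hcomm : ⁅N, N⁆ = ⊥ := Subgroup.commutator_self_eq_bot_iff.2 inferInstance
  have hderived : commutator G ≤ N :=
    (commutator_le_centralizer_of_isCyclic N).trans (centralizer_le_of_isGreatest hN)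
  exact fittingHeight_le_two (nilpotentFactor_of_commutator_le hcomm.le)
    (nilpotentFactor_of_commutator_le hderived)

end FittingHeight

theorem stmt_13_general {G : Type} [Group G] [Finite G] {V : Type*} [AddCommGroup V]
    [Nontrivial V] [DistribMulAction G V]
    (hfpf : ∀ g : G, g ≠ 1 → ∀ v : V, v ≠ 0 → g • v ≠ v)
    (hsol : Group.IsSolvable G) (hht : 3 ≤ fittingHeight G) (Fit : Subgroup G)
    (hFit : IsGreatest {N : Subgroup G | N.Normal ∧ Group.IsNilpotent ↥N} Fit) :
    ∃ k m : ℕ, 1 ≤ k ∧ Odd m ∧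
      Nonempty (↥Fit ≃* QuaternionGroup (2 ^ k) × Multiplicative (ZMod m)) := by
  have hcyc := (abelianSubgroupsCyclic_of_forall_smul_ne hfpf).subgroup Fit
  have := hFit.1.2
  refine hcyc.isCyclic_or_quaternionGroup_prod.resolve_left fun _ => ?_
  have := fittingHeight_le_two_of_isCyclic hFit
  lia

theorem stmt_13 {G : Type} [Group G] [Finite G] {F : Type} [Field F] {V : Type}
    [AddCommGroup V] [Module F V] [Finite V] [Nontrivial V]
    (ρ : G →* (V ≃ₗ[F] V)) (hfaithful : Function.Injective ρ)
    (hfpf : ∀ g : G, g ≠ 1 → ∀ v : V, v ≠ 0 → ρ g v ≠ v)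
    (hsol : IsSolvable G) (hht : 3 ≤ fittingHeight G)
    (Fit : Subgroup G)
    (hFit : IsGreatest {N : Subgroup G | N.Normal ∧ Group.IsNilpotent ↥N} Fit) :
    ∃ k m : ℕ, 1 ≤ k ∧ Odd m ∧
      Nonempty (↥Fit ≃* QuaternionGroup (2 ^ k) × Multiplicative (ZMod m)) := by
  let _ := DistribMulAction.compHom V ρ
  exact stmt_13_general hfpf hsol hht Fit hFit
end
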